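/- Let p_1, p_2 ≥ 1 be integers, p = p_1 + p_2, and let ε : Fin p → Fin 2 be the function taking the value 0 on {0,…,p_1−1} and the value 1 on {p_1,…,p−1}. Then the sum, over all ε-adapted noncrossing finpartitions π of Fin p satisfying π ⊔ γ_{(p_1,p_2)} = ⊤, of (−1)^{|π|} · ∏_{V block of π} C_{(#V)/2 − 1}, equals (−1)^{p_1} if p_1 = p_2 and equals 0 if p_1 ≠ p_2. Here |π| is the number of blocks of π, #V the cardinality of the block V, and C_i the i-th Catalan number. -/

import Mathlib

/-- A finpartition of `Fin p` is noncrossing if there are no `a < b < c < d` with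
`a, c` in one block and `b, d` in a different block. -/
def IsNoncrossing {p : ℕ} (π : Finpartition (Finset.univ : Finset (Fin p))) : Prop :=
  ∀ a b c d : Fin p, a < b → b < c → c < d →
    ∀ B ∈ π.parts, ∀ B' ∈ π.parts, a ∈ B → c ∈ B → b ∈ B' → d ∈ B' → B = B'

/-- A finpartition `π` of `Fin p` is adapted to a labelling `ε : Fin p → Fin 2` if every
block has even cardinality and any two consecutive elements of a block (in increasing
order) carry distinct labels. -/
def IsAdapted {p : ℕ} (ε : Fin p → Fin 2)
    (π : Finpartition (Finset.univ : Finset (Fin p))) : Prop :=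
  ∀ B ∈ π.parts, Even B.card ∧
    ∀ x ∈ B, ∀ y ∈ B, (x < y ∧ ∀ z ∈ B, x < z → y ≤ z) → ε x ≠ ε y

/-- The index of the interval (among the consecutive intervals of lengths `q 0, q 1, …`)
containing `k : Fin p`: the number of prefix sums `q 0 + ⋯ + q i` which are `≤ k`. -/
def intervalIdx {s : ℕ} (q : Fin s → ℕ) {p : ℕ} (k : Fin p) : ℕ :=
  (Finset.univ.filter fun i : Fin s =>
    ∑ j ∈ Finset.univ.filter fun j : Fin s => j ≤ i, q j ≤ (k : ℕ)).card

/-- The interval finpartition `γ_{(q 0, …, q (s-1))}` of `Fin p`, whose blocks are the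
consecutive intervals of lengths `q 0`, `q 1`, …, `q (s-1)` (when `∑ i, q i = p` and
all `q i ≥ 1`). -/
def intervalPart (p : ℕ) {s : ℕ} (q : Fin s → ℕ) :
    Finpartition (Finset.univ : Finset (Fin p)) :=
  letI : DecidableRel ⇑(Setoid.ker (intervalIdx q (p := p))) := fun x y =>
    inferInstanceAs (Decidable (intervalIdx q x = intervalIdx q y))
  Finpartition.ofSetoid (Setoid.ker (intervalIdx q))

/-! A block of an adapted partition meets each label class at most once when the labelling `ε` is
monotone, because labels strictly increase along the block; being nonempty and even, it is a pair
with one label `0` and one label `1`. Sending every point to the other point of its block is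
therefore a fixed-point-free involution, and noncrossingness makes it strictly decreasing. The only
strictly decreasing self-map of `Fin n` is the reversal, so the partition is the rainbow pairing
`{x, n - 1 - x}`, which is adapted exactly when reversal exchanges the two label classes, that is,
when `p₁ = p₂`. The join condition is automatic, since every block of an adapted partition meets the
first interval. Each of the `p₁` blocks of the rainbow contributes `-C₀ = -1`. -/

section Finpartition

variable {α : Type*} [DecidableEq α] {s : Finset α}

lemma finpartition_parts_eq_image_part (π : Finpartition s) : π.parts = s.image π.part := by
  apply Finset.coe_injective
  rw [Finset.coe_image]
  exact (π.part_surjOn.image_eq_of_mapsTo fun _ hx => π.part_mem.2 hx).symm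

lemma finpartition_ext_part {π ρ : Finpartition s} (h : ∀ x ∈ s, π.part x = ρ.part x) :
    π = ρ := by
  ext1
  rw [finpartition_parts_eq_image_part, finpartition_parts_eq_image_part, Finset.image_congr h]

lemma isLUB_pair_top_of_forall_inter_nonempty {π ρ : Finpartition s} {C : Finset α}
    (hC : C ∈ ρ.parts) (hmeet : ∀ B ∈ π.parts, (B ∩ C).Nonempty) : IsLUB {π, ρ} ⊤ := by
  refine ⟨fun _ _ => le_top, fun τ hτ => ?_⟩
  have hπτ : π ≤ τ := hτ (by simp)
  have hρτ : ρ ≤ τ := hτ (by simp)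
  obtain ⟨D, hD, hCD⟩ := hρτ hC
  have hsD : s ⊆ D := by
    intro x hx
    obtain ⟨B, hB, hxB⟩ := π.exists_mem hx
    obtain ⟨E, hE, hBE⟩ := hπτ hB
    obtain ⟨y, hy⟩ := hmeet B hB
    obtain ⟨hyB, hyC⟩ := Finset.mem_inter.1 hy
    obtain rfl : E = D := τ.eq_of_mem_parts hE hD (hBE hyB) (hCD hyC)
    exact hBE hxB
  exact fun B hB => ⟨D, hD, (Finpartition.le _ hB).trans hsD⟩

end Finpartition

lemma eq_rev_of_strictAnti {n : ℕ} {f : Fin n → Fin n} (hf : StrictAnti f) : f = Fin.rev := by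
  have hid : Fin.rev ∘ f = id := (Fin.rev_strictAnti.comp hf).eq_id
  funext x
  exact Fin.rev_eq_iff.1 (congrFun hid x)

section Rainbow

variable {n : ℕ}

open scoped Classical in
/-- The rainbow pairing of `Fin n`, whose blocks are the sets `{x, x.rev}` (a singleton at the
midpoint of an odd `n`), encoded as the fibres of `x ↦ min x x.rev`. -/
noncomputable def rainbow (n : ℕ) : Finpartition (Finset.univ : Finset (Fin n)) :=
  Finpartition.ofSetoid (Setoid.ker fun x : Fin n => min x x.rev)

lemma part_rainbow (x : Fin n) : (rainbow n).part x = {x, x.rev} := by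
  classical
  ext y
  rw [rainbow, Finpartition.mem_part_ofSetoid_iff_rel, Setoid.ker_def]
  simp only [Finset.mem_insert, Finset.mem_singleton, Fin.ext_iff, Fin.coe_min, Fin.val_rev]
  omega

lemma mem_parts_rainbow {B : Finset (Fin n)} :
    B ∈ (rainbow n).parts ↔ ∃ x : Fin n, {x, x.rev} = B := by
  simp [finpartition_parts_eq_image_part, part_rainbow]

lemma isNoncrossing_rainbow (n : ℕ) : IsNoncrossing (rainbow n) := by
  intro a b c d hab hbc hcd B hB B' hB' ha hc hb hd
  obtain ⟨x, rfl⟩ := mem_parts_rainbow.1 hB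
  obtain ⟨y, rfl⟩ := mem_parts_rainbow.1 hB'
  simp only [Finset.mem_insert, Finset.mem_singleton, Fin.ext_iff, Fin.val_rev] at ha hb hc hd
  rw [Fin.lt_def] at hab hbc hcd
  omega

lemma card_of_mem_parts_rainbow (hn : Even n) {B : Finset (Fin n)}
    (hB : B ∈ (rainbow n).parts) : B.card = 2 := by
  obtain ⟨x, rfl⟩ := mem_parts_rainbow.1 hB
  refine Finset.card_pair fun hx => ?_
  have hval : (x : ℕ) = n - (x + 1) := (congrArg Fin.val hx).trans (Fin.val_rev x)
  obtain ⟨k, rfl⟩ := hn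
  omega

lemma two_mul_card_parts_rainbow (hn : Even n) : 2 * (rainbow n).parts.card = n := by
  have hsum := (rainbow n).sum_card_parts
  rw [Finset.sum_const_nat fun B hB => card_of_mem_parts_rainbow hn hB] at hsum
  simpa [mul_comm] using hsum

lemma isAdapted_rainbow_iff {ε : Fin n → Fin 2} :
    IsAdapted ε (rainbow n) ↔ ∀ x, ε x ≠ ε x.rev := by
  constructor
  · intro h x
    obtain ⟨heven, hne⟩ := h _ (mem_parts_rainbow.2 ⟨x, rfl⟩)
    rcases lt_trichotomy x x.rev with hlt | heq | hgt
    · exact hne x (by simp) x.rev (by simp) ⟨hlt, by simp⟩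
    · rw [← heq] at heven
      simp at heven
    · exact (hne x.rev (by simp) x (by simp) ⟨hgt, by simp⟩).symm
  · intro h B hB
    obtain ⟨x, rfl⟩ := mem_parts_rainbow.1 hB
    have hx : x ≠ x.rev := fun heq => h x (congrArg ε heq)
    refine ⟨by simp [Finset.card_pair hx], ?_⟩
    rintro a ha b hb ⟨hab, -⟩
    simp only [Finset.mem_insert, Finset.mem_singleton] at ha hb
    rcases ha with rfl | rfl <;> rcases hb with rfl | rfl
    · exact absurd hab (lt_irrefl _)
    · exact h _
    · exact (h _).symm
    · exact absurd hab (lt_irrefl _)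

end Rainbow

section Classification

variable {n : ℕ} {ε : Fin n → Fin 2} {π : Finpartition (Finset.univ : Finset (Fin n))}

lemma IsNoncrossing.part_eq_part (hπ : IsNoncrossing π) {a b c d : Fin n} (hab : a < b)
    (hbc : b < c) (hcd : c < d) (hac : π.part a = π.part c) (hbd : π.part b = π.part d) :
    π.part a = π.part b :=
  have hpart (x : Fin n) : π.part x ∈ π.parts := π.part_mem.2 (Finset.mem_univ x)
  have hmem (x : Fin n) : x ∈ π.part x := π.mem_part (Finset.mem_univ x)
  hπ a b c d hab hbc hcd _ (hpart a) _ (hpart b) (hmem a) (hac ▸ hmem c) (hmem b) (hbd ▸ hmem d)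

lemma IsAdapted.strictMonoOn (hπ : IsAdapted ε π) (hε : Monotone ε) {B : Finset (Fin n)}
    (hB : B ∈ π.parts) : StrictMonoOn ε B := by
  intro x hx y hy hxy
  obtain ⟨z, hz, hzmin⟩ := (B.filter (x < ·)).exists_min_image id
    ⟨y, Finset.mem_filter.2 ⟨hy, hxy⟩⟩
  obtain ⟨hzB, hxz⟩ := Finset.mem_filter.1 hz
  have hnext : ∀ w ∈ B, x < w → z ≤ w := fun w hw hxw =>
    hzmin w (Finset.mem_filter.2 ⟨hw, hxw⟩)
  calc
    ε x < ε z := (hε hxz.le).lt_of_ne ((hπ B hB).2 x hx z hzB ⟨hxz, hnext⟩)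
    _ ≤ ε y := hε (hnext y hy hxy)

lemma IsAdapted.card_eq_two (hπ : IsAdapted ε π) (hε : Monotone ε) {B : Finset (Fin n)}
    (hB : B ∈ π.parts) : B.card = 2 := by
  have hle : B.card ≤ 2 := by
    simpa using Finset.card_le_card_of_injOn ε (fun _ _ => Finset.mem_univ _)
      (hπ.strictMonoOn hε hB).injOn
  have hpos : 0 < B.card := (π.nonempty_of_mem_parts hB).card_pos
  obtain ⟨k, hk⟩ := (hπ B hB).1
  omega

lemma IsAdapted.exists_part_eq_pair (hπ : IsAdapted ε π) (hε : Monotone ε) (x : Fin n) :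
    ∃ y, ε y ≠ ε x ∧ π.part x = {x, y} := by
  have hx : x ∈ π.part x := π.mem_part (Finset.mem_univ x)
  have hpart : π.part x ∈ π.parts := π.part_mem.2 (Finset.mem_univ x)
  obtain ⟨y, hy⟩ : ∃ y, (π.part x).erase x = {y} := by
    rw [← Finset.card_eq_one, Finset.card_erase_of_mem hx, hπ.card_eq_two hε hpart]
  obtain ⟨hyx, hyB⟩ : y ≠ x ∧ y ∈ π.part x := by
    rw [← Finset.mem_erase, hy]
    exact Finset.mem_singleton_self y
  exact ⟨y, (hπ.strictMonoOn hε hpart).injOn.ne hyB hx hyx, by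
    rw [← hy, Finset.insert_erase hx]⟩

lemma IsAdapted.exists_mem_eq_zero (hπ : IsAdapted ε π) (hε : Monotone ε) {B : Finset (Fin n)}
    (hB : B ∈ π.parts) : ∃ x ∈ B, ε x = 0 := by
  obtain ⟨x, hx⟩ := π.nonempty_of_mem_parts hB
  obtain ⟨y, hyx, hpair⟩ := hπ.exists_part_eq_pair hε x
  rw [π.part_eq_of_mem hB hx] at hpair
  rcases eq_or_ne (ε x) 0 with hx0 | hx0
  · exact ⟨x, hx, hx0⟩
  · exact ⟨y, by simp [hpair], by omega⟩

lemma IsNoncrossing.strictAnti_of_part_eq_pair (hπ : IsNoncrossing π) (hε : Monotone ε)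
    {σ : Fin n → Fin n} (hσε : ∀ x, ε (σ x) ≠ ε x) (hσ : ∀ x, π.part x = {x, σ x}) :
    StrictAnti σ := by
  intro a b hab
  by_contra! hle
  have hεab : ε a = ε b := by
    have := hε hab.le
    have := hε hle
    have := hσε a
    have := hσε b
    omega
  have hparts : π.part a ≠ π.part b := by
    intro heq
    have hb : b = a ∨ b = σ a := by
      simpa [← heq, hσ a] using π.mem_part (Finset.mem_univ b)
    exact hb.elim hab.ne' fun hbσ => hσε a (hbσ ▸ hεab.symm)
  have hpartσ (x : Fin n) : π.part (σ x) = π.part x :=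
    π.part_eq_of_mem (π.part_mem.2 (Finset.mem_univ x)) (by simp [hσ])
  have hlt : σ a < σ b := hle.lt_of_ne fun heq => hparts (by rw [← hpartσ a, heq, hpartσ b])
  rcases (hσε a).lt_or_gt with hleft | hright
  · have hσba : σ b < a := hε.reflect_lt (by have := hσε b; omega)
    have hσparts := hπ.part_eq_part hlt hσba hab (hpartσ a) (hpartσ b)
    exact hparts (by rw [← hpartσ a, hσparts, hpartσ b])
  · have hbσa : b < σ a := hε.reflect_lt (by omega)
    exact hparts (hπ.part_eq_part hab hbσa hlt (hpartσ a).symm (hpartσ b).symm)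

lemma IsNoncrossing.eq_rainbow (hπ : IsNoncrossing π) (hadapted : IsAdapted ε π)
    (hε : Monotone ε) : π = rainbow n := by
  choose σ hσε hσ using hadapted.exists_part_eq_pair hε
  have hrev : σ = Fin.rev := eq_rev_of_strictAnti (hπ.strictAnti_of_part_eq_pair hε hσε hσ)
  exact finpartition_ext_part fun x _ => by rw [hσ, hrev, part_rainbow]

theorem isNoncrossing_and_isAdapted_iff (hε : Monotone ε) :
    IsNoncrossing π ∧ IsAdapted ε π ↔ π = rainbow n ∧ ∀ x, ε x ≠ ε x.rev := by
  constructor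
  · rintro ⟨hnc, hadapted⟩
    obtain rfl := hnc.eq_rainbow hadapted hε
    exact ⟨rfl, isAdapted_rainbow_iff.1 hadapted⟩
  · rintro ⟨rfl, hrev⟩
    exact ⟨isNoncrossing_rainbow n, isAdapted_rainbow_iff.2 hrev⟩

end Classification

section TwoIntervals

variable {p₁ p₂ : ℕ} {ε : Fin (p₁ + p₂) → Fin 2}

lemma monotone_of_eq_ite_lt (hε : ∀ k, ε k = if (k : ℕ) < p₁ then 0 else 1) : Monotone ε := by
  intro a b hab
  rw [Fin.le_def] at hab
  rw [hε, hε]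
  split_ifs <;> omega

lemma forall_ne_rev_iff (hε : ∀ k, ε k = if (k : ℕ) < p₁ then 0 else 1) :
    (∀ x, ε x ≠ ε x.rev) ↔ p₁ = p₂ := by
  have hne_iff (x : Fin (p₁ + p₂)) : ε x ≠ ε x.rev ↔ ((x : ℕ) < p₁ ↔ (x : ℕ) < p₂) := by
    rw [hε, hε, Fin.val_rev]
    split_ifs <;> omega
  simp only [hne_iff]
  refine ⟨fun h => ?_, fun hp x => by omega⟩
  by_contra hne
  rcases Nat.lt_or_gt_of_ne hne with hlt | hgt
  · exact lt_irrefl p₁ ((h ⟨p₁, by omega⟩).2 hlt)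
  · exact lt_irrefl p₂ ((h ⟨p₂, by omega⟩).1 hgt)

lemma intervalIdx_pair (k : Fin (p₁ + p₂)) :
    intervalIdx ![p₁, p₂] k = if (k : ℕ) < p₁ then 0 else 1 := by
  have hfirst : ∑ j with j ≤ (0 : Fin 2), ![p₁, p₂] j = p₁ := by
    simp [Finset.sum_filter]
  have hsecond : ∑ j with j ≤ (1 : Fin 2), ![p₁, p₂] j = p₁ + p₂ := by
    simp [Finset.sum_filter, Fin.le_def]
  rw [intervalIdx, Finset.card_filter, Fin.sum_univ_two, hfirst, hsecond]
  split_ifs <;> omega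

lemma mem_part_intervalPart {p s : ℕ} {q : Fin s → ℕ} {j k : Fin p} :
    k ∈ (intervalPart p q).part j ↔ intervalIdx q j = intervalIdx q k :=
  @Finpartition.mem_part_ofSetoid_iff_rel _ _ _ _ _ (_) _

lemma filter_lt_mem_parts_intervalPart (h₁ : 1 ≤ p₁) :
    (Finset.univ.filter fun k : Fin (p₁ + p₂) => (k : ℕ) < p₁) ∈
      (intervalPart (p₁ + p₂) ![p₁, p₂]).parts := by
  let zero : Fin (p₁ + p₂) := ⟨0, by omega⟩
  have hpart : (intervalPart (p₁ + p₂) ![p₁, p₂]).part zero =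
      Finset.univ.filter fun k : Fin (p₁ + p₂) => (k : ℕ) < p₁ := by
    ext k
    have hzero : (zero : ℕ) < p₁ := h₁
    rw [mem_part_intervalPart, intervalIdx_pair, intervalIdx_pair, if_pos hzero]
    simp
  rw [← hpart]
  exact (Finpartition.part_mem _).2 (Finset.mem_univ zero)

lemma IsAdapted.isLUB_intervalPart {π : Finpartition (Finset.univ : Finset (Fin (p₁ + p₂)))}
    (hπ : IsAdapted ε π) (hε : ∀ k, ε k = if (k : ℕ) < p₁ then 0 else 1) (h₁ : 1 ≤ p₁) :
    IsLUB {π, intervalPart (p₁ + p₂) ![p₁, p₂]} ⊤ := by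
  refine isLUB_pair_top_of_forall_inter_nonempty (filter_lt_mem_parts_intervalPart h₁) ?_
  intro B hB
  obtain ⟨x, hxB, hx⟩ := hπ.exists_mem_eq_zero (monotone_of_eq_ite_lt hε) hB
  have hxp : (x : ℕ) < p₁ := by simpa [hε] using hx
  exact ⟨x, by simp [hxB, hxp]⟩

lemma isNoncrossing_and_isAdapted_and_isLUB_iff
    {π : Finpartition (Finset.univ : Finset (Fin (p₁ + p₂)))}
    (hε : ∀ k, ε k = if (k : ℕ) < p₁ then 0 else 1) (h₁ : 1 ≤ p₁) :
    (IsNoncrossing π ∧ IsAdapted ε π ∧ IsLUB {π, intervalPart (p₁ + p₂) ![p₁, p₂]} ⊤) ↔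
      π = rainbow (p₁ + p₂) ∧ p₁ = p₂ := by
  rw [← forall_ne_rev_iff hε, ← isNoncrossing_and_isAdapted_iff (monotone_of_eq_ite_lt hε)]
  exact ⟨fun h => ⟨h.1, h.2.1⟩, fun h => ⟨h.1, h.2, h.2.isLUB_intervalPart hε h₁⟩⟩

end TwoIntervals

lemma signed_catalan_weight_rainbow (p : ℕ) :
    (-1 : ℤ) ^ (rainbow (p + p)).parts.card *
      ∏ V ∈ (rainbow (p + p)).parts, (catalan (V.card / 2 - 1) : ℤ) = (-1) ^ p := by
  have heven : Even (p + p) := ⟨p, rfl⟩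
  have hcard : (rainbow (p + p)).parts.card = p := by
    have := two_mul_card_parts_rainbow heven
    omega
  rw [hcard, Finset.prod_eq_one, mul_one]
  intro V hV
  simp [card_of_mem_parts_rainbow heven hV]

open Classical in
theorem signed_catalan_sum_over_adapted_noncrossing (p₁ p₂ : ℕ) (h₁ : 1 ≤ p₁)
    (h₂ : 1 ≤ p₂) (ε : Fin (p₁ + p₂) → Fin 2)
    (hε : ∀ k : Fin (p₁ + p₂), ε k = if (k : ℕ) < p₁ then 0 else 1) :
    ∑ π ∈ Finset.univ.filter
        (fun π : Finpartition (Finset.univ : Finset (Fin (p₁ + p₂))) =>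
          IsNoncrossing π ∧ IsAdapted ε π ∧
          IsLUB ({π, intervalPart (p₁ + p₂) ![p₁, p₂]} :
            Set (Finpartition (Finset.univ : Finset (Fin (p₁ + p₂))))) ⊤),
      (-1 : ℤ) ^ π.parts.card * ∏ V ∈ π.parts, (catalan (V.card / 2 - 1) : ℤ) =
    if p₁ = p₂ then (-1 : ℤ) ^ p₁ else 0 := by
  simp only [isNoncrossing_and_isAdapted_and_isLUB_iff hε h₁]
  split_ifs with hp
  · subst hp
    simp [Finset.filter_eq', signed_catalan_weight_rainbow]
  · simp [hp]
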